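/- For any sequence D = (D_n)_{n=1}^∞ of nonempty open subsets of [0,1] forming a base for the topology of [0,1], the space X_D = (C[0,1], ‖·‖_D) has the local diameter 2 property +: for every norm-one functional x* on X_D, every ε > 0, every δ > 0, and every x in the slice S(x*,ε) with ‖x‖_D = 1, there exists y ∈ S(x*,ε) with ‖x − y‖_D > 2 − δ. -/

import Mathlib

open Set Filter Topology

/-- The `n`-th seminorm: `‖x‖ₙ = sup_{d ∈ Dₙ} |x d|`. -/
noncomputable def seminormD (D : ℕ → Set (Icc (0:ℝ) 1)) (n : ℕ)
    (x : C(Icc (0:ℝ) 1, ℝ)) : ℝ :=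
  ⨆ d : D n, |x d|

/-- The norm `‖x‖_D = (Σₙ 2⁻ⁿ ‖x‖ₙ²)^{1/2}` (indexing the sequence from `0`,
with weight `2^{-(n+1)}`). -/
noncomputable def normD (D : ℕ → Set (Icc (0:ℝ) 1)) (x : C(Icc (0:ℝ) 1, ℝ)) : ℝ :=
  Real.sqrt (∑' n : ℕ, (1 / 2 : ℝ) ^ (n + 1) * (seminormD D n x) ^ 2)

/-- `f` is a norm-one linear functional on `X_D = (C[0,1], ‖·‖_D)`:
it is bounded by `‖·‖_D` and its norm (the supremum of `|f x|` over the
`‖·‖_D`-unit ball) equals `1`. -/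
def DualNormOneD (D : ℕ → Set (Icc (0:ℝ) 1)) (f : C(Icc (0:ℝ) 1, ℝ) →ₗ[ℝ] ℝ) : Prop :=
  (∀ x, |f x| ≤ normD D x) ∧ ∀ c : ℝ, c < 1 → ∃ x, normD D x ≤ 1 ∧ c < |f x|

/-!
Only two features of the norm `N = ‖·‖_D` matter: it is monotone in `|x|`, and it is detected on
finitely many infinite sets, in the sense that `N y` is nearly at least `N x` as soon as
`|x| ≤ |y|` holds at one point of each. Choose many pairwise disjoint finite sets, each meeting all
the detecting sets, and a partition of unity `(φ k)` with `φ k = 1` on the `k`-th of them. Changing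
signs of the pieces `x * φ k` does not increase `N`, so `∑ |f (x * φ k)| ≤ N x` and some
`f (x * φ k)` is tiny. Then `y = x - 2 • (x * φ k)` satisfies `|y| ≤ |x|`, stays in the slice, and
`x - y = 2 • (x * φ k)` has norm close to `2 * N x`.
-/

section Cutoff

variable {ι κ X : Type*}

lemma exists_pairwise_disjoint_finset_meeting {W : ι → Set X} {s : Finset ι}
    (hW : ∀ i ∈ s, (W i).Infinite) :
    ∃ F : ℕ → Finset X, (∀ k, ∀ i ∈ s, ∃ p ∈ F k, p ∈ W i) ∧
      Pairwise (Function.onFun Disjoint F) := by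
  classical
  refine exists_seq_of_forall_finset_exists' (fun F : Finset X => ∀ i ∈ s, ∃ p ∈ F, p ∈ W i)
    Disjoint fun used _ => ?_
  have fresh (i : s) : ∃ p ∈ W i, p ∉ used.biUnion id := (hW i i.2).exists_notMem_finset _
  choose p hpW hp_fresh using fresh
  refine ⟨Finset.univ.image p, fun i hi => ⟨p ⟨i, hi⟩, by simp, hpW ⟨i, hi⟩⟩, fun G hG => ?_⟩
  rw [Finset.disjoint_left]
  intro q hqG hq
  obtain ⟨i, -, rfl⟩ := Finset.mem_image.1 hq
  exact hp_fresh i (Finset.mem_biUnion.2 ⟨G, hG, hqG⟩)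

variable [TopologicalSpace X]

lemma exists_partitionOfUnity_eqOn_one [NormalSpace X] [Finite κ] [Nonempty κ] {C : κ → Set X}
    (hC : ∀ k, IsClosed (C k)) (hdisj : Pairwise (Function.onFun Disjoint C)) :
    ∃ ρ : PartitionOfUnity κ X, ∀ k, EqOn (ρ k) 1 (C k) := by
  let U : κ → Set X := fun k => (⋃ j ∈ ({k}ᶜ : Set κ), C j)ᶜ
  have mem_U {k p} : p ∈ U k ↔ ∀ j ≠ k, p ∉ C j := by simp [U]
  have hU_open (k) : IsOpen (U k) :=
    ((toFinite _).isClosed_biUnion fun j _ => hC j).isOpen_compl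
  have hU_cover : univ ⊆ ⋃ k, U k := by
    intro p _
    rw [mem_iUnion]
    by_cases hp : ∃ k, p ∈ C k
    · obtain ⟨k, hpk⟩ := hp
      exact ⟨k, mem_U.2 fun j hjk hpj => disjoint_left.1 (hdisj hjk) hpj hpk⟩
    · exact ⟨Classical.arbitrary κ, mem_U.2 fun j _ hpj => hp ⟨j, hpj⟩⟩
  obtain ⟨ρ, hρU⟩ := PartitionOfUnity.exists_isSubordinate_of_locallyFinite isClosed_univ U
    hU_open (locallyFinite_of_finite U) hU_cover
  refine ⟨ρ, fun k p hp => ?_⟩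
  have eq_zero_of_ne (j) (hj : j ≠ k) : ρ j p = 0 := by
    by_contra hne
    exact mem_U.1 (hρU j (subset_tsupport _ hne)) k hj.symm hp
  rw [← finsum_eq_single (fun j => ρ j p) k eq_zero_of_ne]
  exact ρ.sum_eq_one (mem_univ p)

variable {N : C(X, ℝ) → ℝ} {f : C(X, ℝ) →ₗ[ℝ] ℝ}

lemma sum_abs_map_mul_partitionOfUnity_le [Fintype κ]
    (hN : ∀ x y : C(X, ℝ), (∀ t, |y t| ≤ |x t|) → N y ≤ N x) (hf : ∀ x, f x ≤ N x)
    (ρ : PartitionOfUnity κ X) (x : C(X, ℝ)) : ∑ k, |f (x * ρ k)| ≤ N x := by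
  let σ : κ → ℝ := fun k => SignType.sign (f (x * ρ k))
  have abs_σ_le (k) : |σ k| ≤ 1 := by
    rcases lt_trichotomy (f (x * ρ k)) 0 with h | h | h <;> simp [σ, h]
  have abs_sum_le (t) : |∑ k, σ k * ρ k t| ≤ 1 :=
    calc |∑ k, σ k * ρ k t| ≤ ∑ k, |σ k * ρ k t| := Finset.abs_sum_le_sum_abs _ _
      _ ≤ ∑ k, ρ k t := Finset.sum_le_sum fun k _ => by
          rw [abs_mul, abs_of_nonneg (ρ.nonneg k t)]
          exact mul_le_of_le_one_left (ρ.nonneg k t) (abs_σ_le k)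
      _ = 1 := by rw [← finsum_eq_sum_of_fintype]; exact ρ.sum_eq_one (mem_univ t)
  calc ∑ k, |f (x * ρ k)| = f (∑ k, σ k • (x * ρ k)) := by
        simp only [map_sum, map_smul, smul_eq_mul, σ, sign_mul_self]
    _ ≤ N (∑ k, σ k • (x * ρ k)) := hf _
    _ ≤ N x := hN _ _ fun t => by
        have factor : (∑ k, σ k • (x * ρ k)) t = x t * ∑ k, σ k * ρ k t := by
          simp [ContinuousMap.sum_apply, Finset.mul_sum, mul_left_comm]
        rw [factor, abs_mul]
        exact mul_le_of_le_one_right (abs_nonneg _) (abs_sum_le t)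

lemma exists_cutoff_abs_map_mul_lt [NormalSpace X] [T1Space X]
    (hN : ∀ x y : C(X, ℝ), (∀ t, |y t| ≤ |x t|) → N y ≤ N x) (hf : ∀ x, f x ≤ N x)
    {W : ι → Set X} {s : Finset ι} (hW : ∀ i ∈ s, (W i).Infinite) (x : C(X, ℝ))
    {η : ℝ} (hη : 0 < η) :
    ∃ φ : C(X, ℝ), (∀ t, φ t ∈ Icc 0 1) ∧ (∀ i ∈ s, ∃ p ∈ W i, φ p = 1) ∧ |f (x * φ)| < η := by
  obtain ⟨K, hK⟩ := exists_nat_gt (N x / η)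
  obtain ⟨F, hFW, hF⟩ := exists_pairwise_disjoint_finset_meeting hW
  obtain ⟨ρ, hρ⟩ := exists_partitionOfUnity_eqOn_one
    (C := fun k : Fin (K + 1) => (F k : Set X)) (fun k => (F k).finite_toSet.isClosed)
    fun j k hjk => Finset.disjoint_coe.2 (hF (Fin.val_injective.ne hjk))
  have sum_lt : ∑ k, |f (x * ρ k)| < ∑ _k : Fin (K + 1), η :=
    calc ∑ k, |f (x * ρ k)| ≤ N x := sum_abs_map_mul_partitionOfUnity_le hN hf ρ x
      _ < K * η := (div_lt_iff₀ hη).1 hK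
      _ ≤ ∑ _k : Fin (K + 1), η := by simp [add_mul, hη.le]
  obtain ⟨k, -, hk⟩ := Finset.exists_lt_of_sum_lt sum_lt
  refine ⟨ρ k, fun t => ⟨ρ.nonneg k t, ρ.le_one k t⟩, fun i hi => ?_, hk⟩
  obtain ⟨p, hpF, hpW⟩ := hFW k i hi
  exact ⟨p, hpW, hρ k hpF⟩

end Cutoff

section WeightedSupNorm

variable {ι X : Type*} [TopologicalSpace X]

/-- The supremum of `|x|` over the set `U`; the seminorm `‖x‖ₙ` is the case `U = D n`. It is `0`
for `U = ∅`. -/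
noncomputable def supOn (U : Set X) (x : C(X, ℝ)) : ℝ := ⨆ d : U, |x d|

/-- The weighted `ℓ²`-sum of the suprema of `|x|` over the sets `D i`. The norm `‖·‖_D` is the case
of the weights `2^{-(n+1)}`. -/
noncomputable def weightedSupNorm (w : ι → ℝ) (D : ι → Set X) (x : C(X, ℝ)) : ℝ :=
  √(∑' i, w i * supOn (D i) x ^ 2)

lemma supOn_nonneg (U : Set X) (x : C(X, ℝ)) : 0 ≤ supOn U x :=
  Real.iSup_nonneg fun _ => abs_nonneg _

lemma supOn_smul (U : Set X) (a : ℝ) (x : C(X, ℝ)) : supOn U (a • x) = |a| * supOn U x := by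
  simp only [supOn, ContinuousMap.smul_apply, smul_eq_mul, abs_mul,
    Real.mul_iSup_of_nonneg (abs_nonneg a)]

lemma weightedSupNorm_smul (w : ι → ℝ) (D : ι → Set X) (a : ℝ) (x : C(X, ℝ)) :
    weightedSupNorm w D (a • x) = |a| * weightedSupNorm w D x := by
  simp only [weightedSupNorm, supOn_smul, mul_pow, mul_left_comm _ (|a| ^ 2), tsum_mul_left]
  rw [Real.sqrt_mul (by positivity), Real.sqrt_sq (abs_nonneg a)]

lemma infinite_setOf_mul_supOn_le_abs [T1Space X] [PerfectSpace X] {U : Set X}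
    (hU : IsOpen U) (hne : U.Nonempty) (x : C(X, ℝ)) {c : ℝ} (hc : c < 1) :
    {p | p ∈ U ∧ c * supOn U x ≤ |x p|}.Infinite := by
  rcases (supOn_nonneg U x).eq_or_lt with hzero | hpos
  · obtain ⟨p, hp⟩ := hne
    refine (infinite_of_mem_nhds p (hU.mem_nhds hp)).mono fun q hq => ⟨hq, ?_⟩
    simp [← hzero]
  · have : Nonempty U := hne.to_subtype
    obtain ⟨p, hp⟩ : ∃ p : U, c * supOn U x < |x p| :=
      exists_lt_of_lt_ciSup (mul_lt_of_lt_one_left hpos hc)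
    have hopen : IsOpen {q | c * supOn U x < |x q|} := isOpen_lt continuous_const (by fun_prop)
    exact (infinite_of_mem_nhds p.1 ((hU.inter hopen).mem_nhds ⟨p.2, hp⟩)).mono
      fun q hq => ⟨hq.1, hq.2.le⟩

variable [CompactSpace X] {U : Set X} {x y : C(X, ℝ)} {p : X}

lemma abs_apply_le_supOn (x : C(X, ℝ)) (hp : p ∈ U) : |x p| ≤ supOn U x :=
  le_ciSup (f := fun d : U => |x d|)
    ⟨‖x‖, by rintro _ ⟨d, rfl⟩; exact x.norm_coe_le_norm d⟩ ⟨p, hp⟩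

lemma supOn_le_norm (U : Set X) (x : C(X, ℝ)) : supOn U x ≤ ‖x‖ :=
  Real.iSup_le (fun d => x.norm_coe_le_norm d) (norm_nonneg x)

lemma supOn_mono (h : ∀ t, |y t| ≤ |x t|) : supOn U y ≤ supOn U x :=
  Real.iSup_le (fun d => (h d).trans (abs_apply_le_supOn x d.2)) (supOn_nonneg U x)

variable {w : ι → ℝ} {D : ι → Set X}

lemma summable_mul_supOn_sq (hw₀ : ∀ i, 0 ≤ w i) (hw : Summable w) (D : ι → Set X) (x : C(X, ℝ)) :
    Summable fun i => w i * supOn (D i) x ^ 2 :=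
  (hw.mul_right (‖x‖ ^ 2)).of_nonneg_of_le (fun i => mul_nonneg (hw₀ i) (sq_nonneg _)) fun i =>
    mul_le_mul_of_nonneg_left (pow_le_pow_left₀ (supOn_nonneg _ x) (supOn_le_norm _ x) 2) (hw₀ i)

lemma weightedSupNorm_mono (hw₀ : ∀ i, 0 ≤ w i) (hw : Summable w) (h : ∀ t, |y t| ≤ |x t|) :
    weightedSupNorm w D y ≤ weightedSupNorm w D x :=
  Real.sqrt_le_sqrt <| (summable_mul_supOn_sq hw₀ hw D y).tsum_le_tsum
    (fun i => mul_le_mul_of_nonneg_left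
      (pow_le_pow_left₀ (supOn_nonneg _ y) (supOn_mono h) 2) (hw₀ i))
    (summable_mul_supOn_sq hw₀ hw D x)

lemma mul_sqrt_sum_le_weightedSupNorm (hw₀ : ∀ i, 0 ≤ w i) (hw : Summable w) {s : Finset ι}
    {c : ℝ} (hc : 0 ≤ c) (h : ∀ i ∈ s, c * supOn (D i) x ≤ supOn (D i) y) :
    c * √(∑ i ∈ s, w i * supOn (D i) x ^ 2) ≤ weightedSupNorm w D y :=
  calc c * √(∑ i ∈ s, w i * supOn (D i) x ^ 2)
      = √(∑ i ∈ s, w i * (c * supOn (D i) x) ^ 2) := by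
        simp only [mul_pow, mul_left_comm _ (c ^ 2), ← Finset.mul_sum]
        rw [Real.sqrt_mul (sq_nonneg c), Real.sqrt_sq hc]
    _ ≤ √(∑ i ∈ s, w i * supOn (D i) y ^ 2) := Real.sqrt_le_sqrt <|
        Finset.sum_le_sum fun i hi => mul_le_mul_of_nonneg_left
          (pow_le_pow_left₀ (mul_nonneg hc (supOn_nonneg _ x)) (h i hi) 2) (hw₀ i)
    _ ≤ weightedSupNorm w D y := Real.sqrt_le_sqrt <|
        (summable_mul_supOn_sq hw₀ hw D y).sum_le_tsum s
          fun i _ => mul_nonneg (hw₀ i) (sq_nonneg _)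

lemma exists_infinite_sets_detecting_weightedSupNorm [T1Space X] [PerfectSpace X]
    (hw₀ : ∀ i, 0 ≤ w i) (hw : Summable w) (hDopen : ∀ i, IsOpen (D i))
    (hDne : ∀ i, (D i).Nonempty) {b : ℝ} (hb : b < weightedSupNorm w D x) :
    ∃ (s : Finset ι) (W : ι → Set X), (∀ i ∈ s, (W i).Infinite) ∧
      ∀ y : C(X, ℝ), (∀ i ∈ s, ∃ p ∈ W i, |x p| ≤ |y p|) → b < weightedSupNorm w D y := by
  have tendsto_partial : Tendsto (fun s => √(∑ i ∈ s, w i * supOn (D i) x ^ 2)) atTop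
      (𝓝 (weightedSupNorm w D x)) :=
    (Real.continuous_sqrt.tendsto _).comp (summable_mul_supOn_sq hw₀ hw D x).hasSum
  obtain ⟨s, hs⟩ := (tendsto_partial.eventually_const_lt hb).exists
  set r := √(∑ i ∈ s, w i * supOn (D i) x ^ 2)
  have tendsto_scaled : Tendsto (fun c : ℝ => c * r) (𝓝[<] 1) (𝓝 r) := by
    simpa using (tendsto_id.mul_const r).mono_left (nhdsWithin_le_nhds (a := (1 : ℝ)))
  obtain ⟨c, hbc, hc₀, hc₁⟩ :=
    ((tendsto_scaled.eventually_const_lt hs).and (Ioo_mem_nhdsLT one_pos)).exists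
  refine ⟨s, fun i => {p | p ∈ D i ∧ c * supOn (D i) x ≤ |x p|}, fun i _ =>
    infinite_setOf_mul_supOn_le_abs (hDopen i) (hDne i) x hc₁, fun y hy => ?_⟩
  refine hbc.trans_le (mul_sqrt_sum_le_weightedSupNorm hw₀ hw hc₀.le fun i hi => ?_)
  obtain ⟨p, ⟨hpD, hp⟩, hpy⟩ := hy i hi
  exact hp.trans (hpy.trans (abs_apply_le_supOn y hpD))

theorem normD_LD2P_plus_general [T2Space X] [PerfectSpace X]
    (hw₀ : ∀ i, 0 ≤ w i) (hw : Summable w) (hDopen : ∀ i, IsOpen (D i))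
    (hDne : ∀ i, (D i).Nonempty) {f : C(X, ℝ) →ₗ[ℝ] ℝ}
    (hf : ∀ z, |f z| ≤ weightedSupNorm w D z) {a : ℝ} (hfx : a < f x) {δ : ℝ} (hδ : 0 < δ) :
    ∃ y : C(X, ℝ), weightedSupNorm w D y ≤ weightedSupNorm w D x ∧ a < f y ∧
      2 * weightedSupNorm w D x - δ < weightedSupNorm w D (x - y) := by
  obtain ⟨s, W, hW, detect⟩ := exists_infinite_sets_detecting_weightedSupNorm hw₀ hw hDopen hDne
    (sub_lt_self (weightedSupNorm w D x) (half_pos hδ))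
  obtain ⟨φ, hφ, hφW, hfφ⟩ := exists_cutoff_abs_map_mul_lt (N := weightedSupNorm w D)
    (fun _ _ => weightedSupNorm_mono hw₀ hw) (fun z => (le_abs_self _).trans (hf z)) hW x
    (half_pos (sub_pos.2 hfx))
  refine ⟨x - (2 : ℝ) • (x * φ), weightedSupNorm_mono hw₀ hw fun t => ?_, ?_, ?_⟩
  · have factor : (x - (2 : ℝ) • (x * φ)) t = x t * (1 - 2 * φ t) := by
      simp only [ContinuousMap.sub_apply, ContinuousMap.smul_apply, ContinuousMap.mul_apply,
        smul_eq_mul]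
      ring
    rw [factor, abs_mul]
    exact mul_le_of_le_one_right (abs_nonneg _)
      (abs_le.2 ⟨by linarith [(hφ t).2], by linarith [(hφ t).1]⟩)
  · rw [map_sub, map_smul, smul_eq_mul]
    linarith [(abs_lt.1 hfφ).2]
  · have hxφ : weightedSupNorm w D x - δ / 2 < weightedSupNorm w D (x * φ) :=
      detect _ fun i hi => (hφW i hi).imp fun p hp => ⟨hp.1, by simp [hp.2]⟩
    rw [sub_sub_cancel, weightedSupNorm_smul, abs_two]
    linarith

end WeightedSupNorm

lemma weightedSupNorm_half_pow (D : ℕ → Set (Icc (0 : ℝ) 1)) :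
    weightedSupNorm (fun n => (1 / 2 : ℝ) ^ (n + 1)) D = normD D := rfl

/-- For any base `D` of nonempty open sets of `[0,1]`, the space `X_D = (C[0,1], ‖·‖_D)`
has the local diameter 2 property +. -/
theorem normD_LD2P_plus (D : ℕ → Set (Icc (0:ℝ) 1))
    (hDopen : ∀ n, IsOpen (D n)) (hDne : ∀ n, (D n).Nonempty)
    (hbasis : TopologicalSpace.IsTopologicalBasis (Set.range D)) :
    ∀ f : C(Icc (0:ℝ) 1, ℝ) →ₗ[ℝ] ℝ, DualNormOneD D f →
      ∀ ε : ℝ, 0 < ε → ∀ δ : ℝ, 0 < δ →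
        ∀ x : C(Icc (0:ℝ) 1, ℝ), normD D x ≤ 1 → f x > 1 - ε → normD D x = 1 →
          ∃ y : C(Icc (0:ℝ) 1, ℝ), normD D y ≤ 1 ∧ f y > 1 - ε ∧
            normD D (x - y) > 2 - δ := by
  intro f hf ε _ δ hδ x _ hfx hx1
  simpa only [weightedSupNorm_half_pow, hx1, mul_one] using
    normD_LD2P_plus_general (w := fun n => (1 / 2 : ℝ) ^ (n + 1)) (fun n => by positivity)
      ((summable_nat_add_iff 1).2 summable_geometric_two) hDopen hDne hf.1 hfx hδ
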